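/- Franz's independence lemma: Let p ≥ 1 be a natural number and let S denote the set of residues j ∈ ℤ/p that are coprime to p (the units of ℤ/p). Suppose a : S → ℤ is a function satisfying (1) ∑_{j∈S} a_j = 0, (2) a_j = a_{−j} for every j ∈ S, and (3) for every complex number η with η^p = 1 and η ≠ 1 one has ∏_{j∈S} (η^j − 1)^{a_j} = 1, where η^j means η raised to any integer representative of j (each factor η^j − 1 is nonzero, and negative exponents a_j are interpreted via inverses in ℂ*). Then a_j = 0 for all j ∈ S. -/

import Mathlib

/-!
Taking absolute values and logarithms, the multiplicative relations become linear relations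
`∑ j, a j * log ‖η ^ j - 1‖ = 0`. It suffices to show that `∑ j, a j * χ j = 0` for every
Dirichlet character `χ` modulo `p`. For odd `χ` this is the symmetry of `a`, and for `χ = 1` it is
the vanishing of `∑ j, a j`. Any other `χ` is induced from an even primitive `ψ ≠ 1` modulo some
`N ∣ p`, and the relations at the primitive `N`-th roots of unity, weighted by `ψ⁻¹` and summed,
give `(∑ j, a j * χ j) * ∑ k, ψ⁻¹ k * log ‖1 - e(k / N)‖ = 0`, where `e(x) = exp (2πix)`. The second
factor is, up to sign, the Gauss sum of `ψ⁻¹` times `L(1, ψ)`, hence nonzero by Dirichlet's theorem.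

The link between logarithms and `L`-values is `∑ n ≥ 1, e(nx) / n = -log (1 - e(x))`. Its left side
has to be read as the value at `s = 1` of the analytic function `expZeta x`, whose series converges
absolutely only for `Re s > 1`; the value is reached through the Mellin transform of
`z * exp (-t) / (1 - z * exp (-t))`, `z = e(x)`, which is `Γ(s) * expZeta x s` for `Re s > 1`, is
holomorphic on `Re s > 0`, and at `s = 1` is the integral of the derivative of
`log (1 - z * exp (-t))`.
-/

namespace Franz

open Asymptotics Complex Filter HurwitzZeta MeasureTheory Set Topology
open scoped ComplexConjugate ZMod

/-- The Bose–Einstein kernel with fugacity `z`. Its Mellin transform is `Γ(s)` times the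
polylogarithm `Li_s(z)`, which continues `∑ n ≥ 1, z ^ n / n ^ s` to `Re s > 0` when `‖z‖ = 1` and
`z ≠ 1`. -/
noncomputable def boseKernel (z : ℂ) (t : ℝ) : ℂ := z * cexp (-t) / (1 - z * cexp (-t))

section BoseKernel

variable {z s : ℂ} {t : ℝ}

lemma one_sub_mem_slitPlane (hz : ‖z‖ ≤ 1) (hz1 : z ≠ 1) : 1 - z ∈ slitPlane := by
  rcases (z.re_le_norm.trans hz).lt_or_eq with hre | hre
  · exact Or.inl (by simpa using hre)
  · have him : z.im = 0 :=
      abs_re_eq_norm.mp ((abs_re_le_norm z).antisymm (by simpa [hre] using hz))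
    exact absurd (Complex.ext hre him) hz1

lemma norm_mul_exp_neg_lt_one (hz : ‖z‖ ≤ 1) (ht : 0 < t) : ‖z * cexp (-t)‖ < 1 := by
  rw [norm_mul, norm_exp]
  exact mul_lt_one_of_nonneg_of_lt_one_right hz (Real.exp_pos _).le (by simpa using ht)

lemma one_sub_mul_exp_neg_mem_slitPlane (hz : ‖z‖ ≤ 1) (hz1 : z ≠ 1) (ht : 0 ≤ t) :
    1 - z * cexp (-t) ∈ slitPlane := by
  rcases ht.eq_or_lt with rfl | ht
  · simpa using one_sub_mem_slitPlane hz hz1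
  · have hlt := norm_mul_exp_neg_lt_one hz ht
    exact one_sub_mem_slitPlane hlt.le fun h ↦ by simp [h] at hlt

lemma tendsto_one_sub_mul_exp_neg_atTop (z : ℂ) :
    Tendsto (fun t : ℝ ↦ 1 - z * cexp (-t)) atTop (𝓝 1) := by
  have : Tendsto (fun t : ℝ ↦ cexp (-t)) atTop (𝓝 0) :=
    tendsto_exp_comap_re_atBot.comp
      (tendsto_comap_iff.mpr (by simpa [Function.comp_def] using tendsto_neg_atTop_atBot))
  simpa using (this.const_mul z).const_sub 1

lemma hasDerivAt_log_one_sub_mul_exp_neg (hz : ‖z‖ ≤ 1) (hz1 : z ≠ 1) (ht : 0 ≤ t) :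
    HasDerivAt (fun t : ℝ ↦ log (1 - z * cexp (-t))) (boseKernel z t) t := by
  have hexp : HasDerivAt (fun t : ℝ ↦ cexp (-t)) (cexp (-t) * -1) t :=
    (hasDerivAt_id t).ofReal_comp.fun_neg.cexp
  refine (((hexp.const_mul z).const_sub 1).clog_real
    (one_sub_mul_exp_neg_mem_slitPlane hz hz1 ht)).congr_deriv ?_
  simp [boseKernel]

lemma continuousAt_boseKernel (hz : ‖z‖ ≤ 1) (hz1 : z ≠ 1) (ht : 0 ≤ t) :
    ContinuousAt (boseKernel z) t := by
  have := slitPlane_ne_zero (one_sub_mul_exp_neg_mem_slitPlane hz hz1 ht)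
  unfold boseKernel
  fun_prop (disch := assumption)

lemma locallyIntegrableOn_boseKernel (hz : ‖z‖ ≤ 1) (hz1 : z ≠ 1) :
    LocallyIntegrableOn (boseKernel z) (Ioi 0) :=
  (continuousOn_of_forall_continuousAt fun _ ht ↦
    continuousAt_boseKernel hz hz1 (mem_Ioi.mp ht).le).locallyIntegrableOn measurableSet_Ioi

-- The shapes `-1 * t` and `t ^ (-0)` are those of the Mellin transform lemmas of Mathlib.
lemma isBigO_boseKernel_atTop (z : ℂ) :
    boseKernel z =O[atTop] fun t ↦ Real.exp (-1 * t) := by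
  have hbdd : (fun t : ℝ ↦ z / (1 - z * cexp (-t))) =O[atTop] fun _ ↦ (1 : ℝ) :=
    (tendsto_const_nhds.div (tendsto_one_sub_mul_exp_neg_atTop z) one_ne_zero).isBigO_one ℝ
  have hexp : (fun t : ℝ ↦ cexp (-t)) =O[atTop] fun t ↦ Real.exp (-1 * t) :=
    .of_norm_le fun t ↦ by simp [norm_exp]
  refine (hbdd.mul hexp).congr (fun t ↦ ?_) fun t ↦ one_mul _
  rw [boseKernel, div_mul_eq_mul_div]

lemma isBigO_boseKernel_zero (hz : ‖z‖ ≤ 1) (hz1 : z ≠ 1) :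
    boseKernel z =O[𝓝[>] 0] fun t ↦ t ^ (-0 : ℝ) := by
  simpa using ((continuousAt_boseKernel hz hz1 le_rfl).tendsto.isBigO_one ℝ).mono
    nhdsWithin_le_nhds

lemma differentiableAt_mellin_boseKernel (hz : ‖z‖ ≤ 1) (hz1 : z ≠ 1) (hs : 0 < s.re) :
    DifferentiableAt ℂ (mellin (boseKernel z)) s :=
  mellin_differentiableAt_of_isBigO_rpow_exp one_pos (locallyIntegrableOn_boseKernel hz hz1)
    (isBigO_boseKernel_atTop z) (isBigO_boseKernel_zero hz hz1) hs

lemma integrableOn_boseKernel (hz : ‖z‖ ≤ 1) (hz1 : z ≠ 1) :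
    IntegrableOn (boseKernel z) (Ioi 0) := by
  simpa [MellinConvergent] using mellinConvergent_of_isBigO_rpow_exp (s := 1) one_pos
    (locallyIntegrableOn_boseKernel hz hz1) (isBigO_boseKernel_atTop z)
    (isBigO_boseKernel_zero hz hz1) (by simp)

lemma mellin_boseKernel_one (hz : ‖z‖ ≤ 1) (hz1 : z ≠ 1) :
    mellin (boseKernel z) 1 = -log (1 - z) := by
  have hlim : Tendsto (fun t : ℝ ↦ log (1 - z * cexp (-t))) atTop (𝓝 0) := by
    simpa using (tendsto_one_sub_mul_exp_neg_atTop z).clog one_mem_slitPlane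
  simpa [mellin] using integral_Ioi_of_hasDerivAt_of_tendsto'
    (fun _ ht ↦ hasDerivAt_log_one_sub_mul_exp_neg hz hz1 ht) (integrableOn_boseKernel hz hz1) hlim

lemma hasSum_boseKernel (hz : ‖z‖ ≤ 1) (ht : 0 < t) :
    HasSum (fun n : ℕ ↦ z ^ (n + 1) * Real.exp (-(n + 1 : ℝ) * t)) (boseKernel z t) := by
  refine ((hasSum_geometric_of_norm_lt_one (norm_mul_exp_neg_lt_one hz ht)).mul_left
    (z * cexp (-t))).congr_fun fun n ↦ ?_
  rw [← pow_succ', mul_pow, ← exp_nat_mul]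
  push_cast
  ring_nf

lemma hasSum_mellin_boseKernel (hz : ‖z‖ ≤ 1) (hs : 1 < s.re) :
    HasSum (fun n : ℕ ↦ Gamma s * z ^ (n + 1) / (n + 1 : ℂ) ^ s) (mellin (boseKernel z) s) := by
  have hsummable : Summable fun n : ℕ ↦ ‖z ^ (n + 1)‖ / (n + 1 : ℝ) ^ s.re := by
    refine .of_nonneg_of_le (fun n ↦ by positivity) (fun n ↦ ?_)
      ((summable_nat_add_iff 1).mpr (Real.summable_one_div_nat_rpow.mpr hs))
    rw [norm_pow]
    push_cast
    gcongr
    exact pow_le_one₀ (norm_nonneg z) hz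
  simpa using hasSum_mellin (fun n : ℕ ↦ .inr n.cast_add_one_pos) (one_pos.trans hs)
    (fun t ht ↦ hasSum_boseKernel hz ht) hsummable

end BoseKernel

lemma hasSum_toCircle_pow_div_cpow_expZeta (x : UnitAddCircle) {s : ℂ} (hs : 1 < s.re) :
    HasSum (fun n : ℕ ↦ (x.toCircle : ℂ) ^ n / (n : ℂ) ^ s) (expZeta x s) := by
  induction x using QuotientAddGroup.induction_on with
  | H a =>
    convert hasSum_expZeta_of_one_lt_re a hs using 3 with n
    rw [AddCircle.toCircle_apply_mk, Circle.coe_exp, ← exp_nat_mul]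
    push_cast
    ring_nf

lemma mellin_boseKernel_toCircle (x : UnitAddCircle) {s : ℂ} (hs : 1 < s.re) :
    mellin (boseKernel x.toCircle) s = Gamma s * expZeta x s := by
  have hs0 : s ≠ 0 := fun h ↦ by norm_num [h] at hs
  have hsum := (hasSum_nat_add_iff' 1).mpr (hasSum_toCircle_pow_div_cpow_expZeta x hs)
  refine (hasSum_mellin_boseKernel (Circle.norm_coe _).le hs).unique ?_
  simpa [hs0, mul_div_assoc] using hsum.mul_left (Gamma s)

lemma coe_toCircle_ne_one {T : ℝ} (hT : T ≠ 0) {x : AddCircle T} (hx : x ≠ 0) :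
    (x.toCircle : ℂ) ≠ 1 := by
  rw [ne_eq, Circle.coe_eq_one, ← AddCircle.toCircle_zero]
  exact fun h ↦ hx (AddCircle.injective_toCircle hT h)

theorem expZeta_one {x : UnitAddCircle} (hx : x ≠ 0) :
    expZeta x 1 = -log (1 - x.toCircle) := by
  have hz := (Circle.norm_coe x.toCircle).le
  have hz1 := coe_toCircle_ne_one one_ne_zero hx
  have hmellin : ContinuousAt (fun σ : ℝ ↦ mellin (boseKernel x.toCircle) σ) 1 :=
    ContinuousAt.comp_of_eq (g := mellin (boseKernel x.toCircle)) (y := 1)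
      (differentiableAt_mellin_boseKernel hz hz1 (by simp)).continuousAt (by fun_prop) (by simp)
  have hzeta : ContinuousAt (fun σ : ℝ ↦ Gamma σ * expZeta x σ) 1 := by
    refine ContinuousAt.comp_of_eq (g := fun s ↦ Gamma s * expZeta x s) (y := 1) ?_
      (by fun_prop) (by simp)
    exact (differentiableAt_Gamma_one.mul (differentiable_expZeta_of_ne_zero hx 1)).continuousAt
  have heq : mellin (boseKernel x.toCircle) (1 : ℝ) = Gamma (1 : ℝ) * expZeta x (1 : ℝ) := by
    refine tendsto_nhds_unique (hmellin.tendsto.mono_left (nhdsWithin_le_nhds (s := Ioi 1))) ?_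
    refine (hzeta.tendsto.mono_left nhdsWithin_le_nhds).congr' ?_
    filter_upwards [self_mem_nhdsWithin] with σ hσ
    exact (mellin_boseKernel_toCircle x (by simpa using hσ)).symm
  simpa [mellin_boseKernel_one hz hz1] using heq.symm

theorem cosZeta_one {x : UnitAddCircle} (hx : x ≠ 0) :
    cosZeta x 1 = -Real.log ‖1 - (x.toCircle : ℂ)‖ := by
  have hneg : log (1 - (-x).toCircle) = conj (log (1 - x.toCircle)) := by
    rw [← log_conj _ (slitPlane_arg_ne_pi (one_sub_mem_slitPlane (Circle.norm_coe _).le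
      (coe_toCircle_ne_one one_ne_zero hx))), AddCircle.toCircle_neg, Circle.coe_inv_eq_conj]
    simp
  rw [cosZeta_eq, expZeta_one hx, expZeta_one (neg_ne_zero.mpr hx), hneg, ← neg_add, add_conj,
    log_re]
  push_cast
  ring

variable {N : ℕ} [NeZero N]

theorem LFunction_dft_one_of_even {Φ : ZMod N → ℂ} (hΦ : Φ.Even) (h0 : Φ 0 = 0) :
    ZMod.LFunction (𝓕 Φ) 1 = -∑ j, Φ j * Real.log ‖1 - ZMod.stdAddChar j‖ := by
  have hodd : Function.Odd fun j ↦ Φ j * sinZeta (ZMod.toAddCircle j) 1 := fun j ↦ by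
    simp only [hΦ j, map_neg, sinZeta_neg, mul_neg]
  have hcos (j : ZMod N) : Φ j * cosZeta (ZMod.toAddCircle (-j)) 1 =
      -(Φ j * Real.log ‖1 - ZMod.stdAddChar j‖) := by
    rcases eq_or_ne j 0 with rfl | hj
    · simp [h0]
    · rw [map_neg, cosZeta_neg, cosZeta_one (mt ZMod.toAddCircle_eq_zero.mp hj), mul_neg]
      rfl
  have hsin (j : ZMod N) : Φ j * (I * sinZeta (ZMod.toAddCircle (-j)) 1) =
      -I * (Φ j * sinZeta (ZMod.toAddCircle j) 1) := by
    rw [map_neg, sinZeta_neg]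
    ring
  simp only [ZMod.LFunction_dft Φ (Or.inl h0), expZeta, mul_add, Finset.sum_add_distrib, hcos,
    hsin, ← Finset.mul_sum, hodd.sum_eq_zero, mul_zero, add_zero, Finset.sum_neg_distrib]

lemma even_inv {R : Type*} [CommRing R] {n : ℕ} {χ : DirichletCharacter R n} (heven : χ.Even) :
    χ⁻¹.Even := by
  rw [DirichletCharacter.Even, MulChar.inv_apply_eq_inv, heven, Ring.inverse_one]

variable {χ : DirichletCharacter ℂ N}

lemma gaussSum_stdAddChar_ne_zero (hχ : χ.IsPrimitive) : gaussSum χ ZMod.stdAddChar ≠ 0 := by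
  intro h
  have hdft : 𝓕 (χ : ZMod N → ℂ) = 0 := by
    ext k
    rw [hχ.fourierTransform_eq_inv_mul_gaussSum, h, mul_zero, Pi.zero_apply]
  simpa using congrFun (ZMod.dft.map_eq_zero_iff.mp hdft) 1

lemma LFunction_dft_eq_gaussSum_mul_LFunction (hχ : χ.IsPrimitive) (heven : χ.Even) (s : ℂ) :
    ZMod.LFunction (𝓕 (χ : ZMod N → ℂ)) s =
      gaussSum χ ZMod.stdAddChar * DirichletCharacter.LFunction χ⁻¹ s := by
  have hdft (k : ZMod N) : 𝓕 (χ : ZMod N → ℂ) k = gaussSum χ ZMod.stdAddChar * χ⁻¹ k := by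
    rw [hχ.fourierTransform_eq_inv_mul_gaussSum, (even_inv heven).eval_neg, mul_comm]
  simp only [DirichletCharacter.LFunction, ZMod.LFunction, hdft, mul_assoc, Finset.mul_sum,
    mul_left_comm]

theorem sum_mul_log_norm_one_sub_stdAddChar_ne_zero (hχ : χ.IsPrimitive) (heven : χ.Even)
    (h1 : χ ≠ 1) : ∑ j, χ j * Real.log ‖1 - ZMod.stdAddChar j‖ ≠ 0 := by
  have hN : N ≠ 1 := by
    rintro rfl
    exact h1 χ.level_one
  have : Nontrivial (ZMod N) := ZMod.nontrivial_iff.mpr hN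
  rw [← neg_ne_zero,
    ← LFunction_dft_one_of_even heven.to_fun (MulChar.map_nonunit _ not_isUnit_zero),
    LFunction_dft_eq_gaussSum_mul_LFunction hχ heven]
  exact mul_ne_zero (gaussSum_stdAddChar_ne_zero hχ)
    (DirichletCharacter.LFunction_apply_one_ne_zero (inv_ne_one.mpr h1))

lemma sum_mul_mul_sum_inv_mul {ι M R : Type*} [Fintype ι] [CommMonoid M] [Fintype M]
    [CommSemiring R] (χ : MulChar M R) (u : ι → Mˣ) (a : ι → R) (f : M → R) :
    (∑ i, a i * χ (u i)) * ∑ m, χ⁻¹ m * f m = ∑ m, χ⁻¹ m * ∑ i, a i * f (u i * m) := by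
  have hu (i : ι) : χ (u i) * χ⁻¹ (u i) = 1 := by
    rw [← MulChar.mul_apply, mul_inv_cancel, MulChar.one_apply_coe]
  have htranslate (i : ι) : χ (u i) * ∑ m, χ⁻¹ m * f m = ∑ m, χ⁻¹ m * f (u i * m) := by
    rw [← Equiv.sum_comp (Units.mulLeft (u i)), Finset.mul_sum]
    refine Fintype.sum_congr _ _ fun m ↦ ?_
    rw [Units.mulLeft_apply, map_mul, mul_assoc, ← mul_assoc, hu, one_mul]
  calc (∑ i, a i * χ (u i)) * ∑ m, χ⁻¹ m * f m
      = ∑ i, a i * ∑ m, χ⁻¹ m * f (u i * m) := by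
        simp only [Finset.sum_mul, mul_assoc, ← htranslate]
    _ = ∑ m, χ⁻¹ m * ∑ i, a i * f (u i * m) := by
        simp only [Finset.mul_sum, mul_left_comm]
        exact Finset.sum_comm

theorem eq_zero_of_forall_sum_mul_dirichletCharacter_eq_zero {R : Type*} [CommRing R] [IsDomain R]
    [CharZero R] {n : ℕ} [NeZero n] [HasEnoughRootsOfUnity R (Monoid.exponent (ZMod n)ˣ)]
    {a : (ZMod n)ˣ → R} (h : ∀ χ : DirichletCharacter R n, ∑ j, a j * χ j = 0) : a = 0 := by
  ext i
  have hφ : (n.totient : R) ≠ 0 := Nat.cast_ne_zero.mpr (Nat.totient_pos.mpr (NeZero.pos n)).ne'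
  refine (mul_eq_zero.mp ?_).resolve_right hφ
  calc a i * n.totient = ∑ j, a j * ∑ χ : DirichletCharacter R n, χ (i : ZMod n)⁻¹ * χ j := by
        simp only [DirichletCharacter.sum_char_inv_mul_char_eq R i.isUnit, Units.val_inj]
        simp
    _ = ∑ χ : DirichletCharacter R n, χ (i : ZMod n)⁻¹ * ∑ j, a j * χ j := by
        simp only [Finset.mul_sum, mul_left_comm]
        exact Finset.sum_comm
    _ = 0 := by simp only [h, mul_zero, Finset.sum_const_zero]

theorem sum_mul_eq_zero_of_isPrimitive {ι : Type*} [Fintype ι] {u : ι → (ZMod N)ˣ} {a : ι → ℂ}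
    (hlog : ∀ k : (ZMod N)ˣ, ∑ i, a i * Real.log ‖1 - ZMod.stdAddChar (u i * k : ZMod N)‖ = 0)
    (hχ : χ.IsPrimitive) (heven : χ.Even) (h1 : χ ≠ 1) : ∑ i, a i * χ (u i) = 0 := by
  have hχ' : χ⁻¹.IsPrimitive := χ.conductor_inv.trans hχ
  refine (mul_eq_zero.mp ?_).resolve_right
    (sum_mul_log_norm_one_sub_stdAddChar_ne_zero hχ' (even_inv heven) (inv_ne_one.mpr h1))
  rw [sum_mul_mul_sum_inv_mul]
  refine Finset.sum_eq_zero fun k _ ↦ ?_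
  by_cases hk : IsUnit k
  · rw [← hk.unit_spec, hlog, mul_zero]
  · rw [χ⁻¹.map_nonunit hk, zero_mul]

lemma primitiveCharacter_unitsMap {R : Type*} [CommMonoidWithZero R] {n : ℕ}
    (χ : DirichletCharacter R n) (j : (ZMod n)ˣ) :
    χ.primitiveCharacter (ZMod.unitsMap χ.conductor_dvd_level j) = χ j := by
  conv_rhs => rw [← χ.changeLevel_primitiveCharacter]
  rw [DirichletCharacter.changeLevel_eq_cast_of_dvd, ZMod.unitsMap_val]

lemma even_primitiveCharacter {R : Type*} [CommRing R] {n : ℕ} {χ : DirichletCharacter R n}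
    (heven : χ.Even) : χ.primitiveCharacter.Even := by
  have h := χ.primitiveCharacter_apply_of_isCoprime isCoprime_one_left.neg_left
  push_cast at h
  exact h.trans heven

lemma stdAddChar_pow_eq_one {p : ℕ} (hN : N ∣ p) (k : ZMod N) :
    ZMod.stdAddChar k ^ p = (1 : ℂ) := by
  rw [← AddChar.map_nsmul_eq_pow, nsmul_eq_mul, (ZMod.natCast_eq_zero_iff p N).mpr hN, zero_mul,
    AddChar.map_zero_eq_one]

lemma stdAddChar_pow_val {p : ℕ} [NeZero p] (j : ZMod p) (k : ZMod N) :
    (ZMod.stdAddChar k ^ j.val : ℂ) = ZMod.stdAddChar (j.cast * k) := by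
  rw [← AddChar.map_nsmul_eq_pow, nsmul_eq_mul, ZMod.natCast_val]

lemma stdAddChar_ne_one {k : ZMod N} (hk : k ≠ 0) : ZMod.stdAddChar k ≠ (1 : ℂ) := by
  rwa [← AddChar.map_zero_eq_one (ZMod.stdAddChar (N := N)), ZMod.injective_stdAddChar.ne_iff]

lemma sum_mul_log_norm_eq_zero_of_prod_zpow_eq_one {ι K : Type*} [Fintype ι] [NormedField K]
    {f : ι → K} {a : ι → ℤ} (h : ∏ i, f i ^ a i = 1) : ∑ i, a i * Real.log ‖f i‖ = 0 := by
  have hne (i : ι) : f i ^ a i ≠ 0 :=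
    Finset.prod_ne_zero_iff.mp (h ▸ one_ne_zero) i (Finset.mem_univ i)
  calc ∑ i, a i * Real.log ‖f i‖ = Real.log ‖∏ i, f i ^ a i‖ := by
        rw [norm_prod, Real.log_prod fun i _ ↦ norm_ne_zero_iff.mpr (hne i)]
        simp only [norm_zpow, Real.log_zpow]
    _ = 0 := by rw [h, norm_one, Real.log_one]

lemma sum_mul_eq_zero_of_odd {R : Type*} [CommRing R] [IsAddTorsionFree R] {n : ℕ} [NeZero n]
    {a : (ZMod n)ˣ → R} (hsymm : ∀ j, a (-j) = a j) {χ : DirichletCharacter R n} (hodd : χ.Odd) :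
    ∑ j, a j * χ j = 0 := by
  refine Function.Odd.sum_eq_zero (f := fun j : (ZMod n)ˣ ↦ a j * χ j) fun j ↦ ?_
  simp only [hsymm, Units.val_neg, hodd.eval_neg, mul_neg]

theorem sum_mul_eq_zero_of_even {p : ℕ} [NeZero p] {a : (ZMod p)ˣ → ℂ}
    (hlog : ∀ η : ℂ, η ^ p = 1 → η ≠ 1 →
      ∑ j : (ZMod p)ˣ, a j * Real.log ‖η ^ (j : ZMod p).val - 1‖ = 0)
    {χ : DirichletCharacter ℂ p} (heven : χ.Even) (h1 : χ ≠ 1) : ∑ j, a j * χ j = 0 := by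
  have hdvd := χ.conductor_dvd_level
  have : NeZero χ.conductor := ⟨χ.conductor_ne_zero⟩
  have : Nontrivial (ZMod χ.conductor) :=
    ZMod.nontrivial_iff.mpr (mt χ.eq_one_iff_conductor_eq_one.mpr h1)
  have hprim1 : χ.primitiveCharacter ≠ 1 := fun h ↦
    h1 (by rw [← χ.changeLevel_primitiveCharacter, h, map_one])
  have hrel (k : (ZMod χ.conductor)ˣ) : ∑ j, a j *
      Real.log ‖1 - ZMod.stdAddChar (ZMod.unitsMap hdvd j * k : ZMod χ.conductor)‖ = 0 := by
    simpa only [stdAddChar_pow_val, ZMod.unitsMap_val, norm_sub_rev] using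
      hlog _ (stdAddChar_pow_eq_one hdvd k) (stdAddChar_ne_one k.ne_zero)
  simpa only [primitiveCharacter_unitsMap] using sum_mul_eq_zero_of_isPrimitive hrel
    χ.primitiveCharacter_isPrimitive (even_primitiveCharacter heven) hprim1

end Franz

theorem franz_independence_lemma_general (p : ℕ) [NeZero p] (a : (ZMod p)ˣ → ℂ)
    (hsum : ∑ j, a j = 0) (hsymm : ∀ j, a (-j) = a j)
    (hlog : ∀ η : ℂ, η ^ p = 1 → η ≠ 1 →
      ∑ j : (ZMod p)ˣ, a j * Real.log ‖η ^ (j : ZMod p).val - 1‖ = 0) : ∀ j, a j = 0 := by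
  refine congrFun (Franz.eq_zero_of_forall_sum_mul_dirichletCharacter_eq_zero fun χ ↦ ?_)
  rcases χ.even_or_odd with heven | hodd
  · rcases eq_or_ne χ 1 with rfl | h1
    · simpa using hsum
    · exact Franz.sum_mul_eq_zero_of_even hlog heven h1
  · exact Franz.sum_mul_eq_zero_of_odd hsymm hodd

/-- Franz's independence lemma: let `p ≥ 1` and let `S = (ℤ/p)ˣ` be the residues coprime
to `p`.  If `a : S → ℤ` satisfies `∑ a_j = 0`, `a_j = a_{-j}`, and
`∏_{j ∈ S} (η^j − 1)^{a_j} = 1` for every `p`-th root of unity `η ≠ 1`, then `a = 0`. -/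
theorem franz_independence_lemma (p : ℕ) [NeZero p] (a : (ZMod p)ˣ → ℤ)
    (hsum : ∑ j : (ZMod p)ˣ, a j = 0)
    (hsymm : ∀ j : (ZMod p)ˣ, a (-j) = a j)
    (hprod : ∀ η : ℂ, η ^ p = 1 → η ≠ 1 →
      ∏ j : (ZMod p)ˣ, (η ^ ((j : ZMod p).val) - 1) ^ (a j) = 1) :
    ∀ j, a j = 0 := by
  have := franz_independence_lemma_general p (fun j ↦ a j) (mod_cast hsum) (mod_cast hsymm)
    fun η hη hη1 ↦ mod_cast Franz.sum_mul_log_norm_eq_zero_of_prod_zpow_eq_one (hprod η hη hη1)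
  exact_mod_cast this
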